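/- Entropy decay of the down-up walk: For every 1 ≤ k ≤ d and every strictly positive f : 𝒞(k) → ℝ_{>0}, 𝔈_{P_k^∨}(f, log f) ≥ Ent_{π_k}(f) − Ent_{π_{k−1}}(P_{k−1}^↑ f). -/

import Mathlib

/-!
Write `j = k - 1`, `π = π_k` and `g = P_j^↑ f`. The proof rests on two facts.

* *Compatibility of levels.* For every `R ∈ C(j)`, `∑_{S ∈ C(k), S ⊇ R} π_k(S) = k π_j(R)`
  (`sum_piLev_above`). It follows from double counting: each top face `T ⊇ R` contains `d - j`
  faces `S ∈ C(k)` above `R`, so `∑_{S ⊇ R} w(S) = (d - j) w(R)` for the weights, and summing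
  over `R` relates the two normalising constants.
* *Jensen's inequality* for the concave function `log`: `P_j^↑ (log f) ≤ log g` wherever
  the transition probabilities of `P_j^↑` sum to one.

By compatibility, `P_k^↓` is the adjoint of `P_j^↑` (`sum_piLev_mul_downOp`), so
`𝔈(f, log f) = E_{π_k}[f log f] - E_{π_j}[g · P_j^↑ (log f)] ≥ E_{π_k}[f log f] - E_{π_j}[g log g]`.
The remaining terms of the two entropies cancel because `E_{π_j}[g] = E_{π_k}[f]`, which is
adjointness applied to the constant function `1`.
-/

open Finset

noncomputable section

variable {E : Type*} [Fintype E] [DecidableEq E]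

/-- The faces of cardinality `k` of the set family `C`. -/
def faces (C : Finset (Finset E)) (k : ℕ) : Finset (Finset E) :=
  C.filter fun S => S.card = k

/-- `C` is a pure simplicial complex of dimension `d`: it is nonempty, closed under
taking subsets, and every face is contained in a face of cardinality `d`
(hence all maximal faces have cardinality `d`). -/
def IsPureComplex (C : Finset (Finset E)) (d : ℕ) : Prop :=
  C.Nonempty ∧ (∀ S ∈ C, ∀ T ⊆ S, T ∈ C) ∧ (∀ S ∈ C, ∃ T ∈ C, S ⊆ T ∧ T.card = d)

/-- `pid` is a probability distribution with full support on the top level faces. -/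
def IsTopDist (C : Finset (Finset E)) (d : ℕ) (pid : Finset E → ℝ) : Prop :=
  (∀ T ∈ faces C d, 0 < pid T) ∧ ∑ T ∈ faces C d, pid T = 1

/-- The (unnormalised) weight of a face: total top-level mass above it. -/
def wgt (C : Finset (Finset E)) (d : ℕ) (pid : Finset E → ℝ) (S : Finset E) : ℝ :=
  ∑ T ∈ (faces C d).filter (fun T => S ⊆ T), pid T

/-- The distribution `π_k` at level `k`: `π_k(S) ∝ Σ_{T ∈ C(d), T ⊇ S} π_d(T)`. -/
def piLev (C : Finset (Finset E)) (d : ℕ) (pid : Finset E → ℝ) (k : ℕ) (S : Finset E) : ℝ :=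
  if S ∈ faces C k then wgt C d pid S / ∑ T ∈ faces C k, wgt C d pid T else 0

/-- The level-`k` faces of the link of the face `S`. -/
def linkFaces (C : Finset (Finset E)) (S : Finset E) (k : ℕ) : Finset (Finset E) :=
  Finset.univ.powerset.filter fun T => S ∩ T = ∅ ∧ S ∪ T ∈ C ∧ T.card = k

/-- The distribution `π_{S,k}` on the level-`k` faces of the link of `S`:
`π_{S,k}(T) ∝ π_{|S|+k}(S ∪ T)`. -/
def linkPi (C : Finset (Finset E)) (d : ℕ) (pid : Finset E → ℝ) (S : Finset E) (k : ℕ)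
    (T : Finset E) : ℝ :=
  if T ∈ linkFaces C S k then
    piLev C d pid (S.card + k) (S ∪ T) /
      ∑ T' ∈ linkFaces C S k, piLev C d pid (S.card + k) (S ∪ T')
  else 0

/-- Generic up operator with respect to a measure `ν` on a collection `dom` of faces:
from `R` move to a superset `T ∈ dom` with probability proportional to `ν T`.
Acts on functions on `dom`, producing a function on the level below. -/
def upWith (ν : Finset E → ℝ) (dom : Finset (Finset E)) (f : Finset E → ℝ) (R : Finset E) : ℝ :=
  ∑ T ∈ dom.filter (fun T => R ⊆ T),
    (ν T / ∑ T' ∈ dom.filter (fun T' => R ⊆ T'), ν T') * f T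

/-- The up operator `P_k^↑`, acting on functions on `C(k+1)` and producing a function
on `C(k)`. -/
def upOp (C : Finset (Finset E)) (d : ℕ) (pid : Finset E → ℝ) (k : ℕ) :
    (Finset E → ℝ) → Finset E → ℝ :=
  upWith (piLev C d pid (k+1)) (faces C (k+1))

/-- The down operator `P_k^↓` (uniform removal of an element), acting on functions
on `C(k-1)` and producing a function on `C(k)`. -/
def downOp (k : ℕ) (g : Finset E → ℝ) (S : Finset E) : ℝ :=
  (1 / (k : ℝ)) * ∑ i ∈ S, g (S.erase i)

/-- The down-up walk `P_k^∨ = P_k^↓ P_{k-1}^↑` on `C(k)`, as an operator on functions. -/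
def downUp (C : Finset (Finset E)) (d : ℕ) (pid : Finset E → ℝ) (k : ℕ)
    (f : Finset E → ℝ) : Finset E → ℝ :=
  downOp k (upOp C d pid (k-1) f)

/-- The up-down walk `P_k^∧ = P_k^↑ P_{k+1}^↓` on `C(k)`, as an operator on functions. -/
def upDown (C : Finset (Finset E)) (d : ℕ) (pid : Finset E → ℝ) (k : ℕ)
    (f : Finset E → ℝ) : Finset E → ℝ :=
  upOp C d pid k (downOp (k+1) f)

/-- The up operator `P_{S,k}^↑` on the link of `S`, acting on functions on `C_S(k+1)`
and producing a function on `C_S(k)`. -/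
def linkUp (C : Finset (Finset E)) (d : ℕ) (pid : Finset E → ℝ) (S : Finset E) (k : ℕ) :
    (Finset E → ℝ) → Finset E → ℝ :=
  upWith (linkPi C d pid S (k+1)) (linkFaces C S (k+1))

/-- The up-down walk `P_{S,k}^∧` on the level-`k` faces of the link of `S`. -/
def linkUpDown (C : Finset (Finset E)) (d : ℕ) (pid : Finset E → ℝ) (S : Finset E) (k : ℕ)
    (f : Finset E → ℝ) : Finset E → ℝ :=
  linkUp C d pid S k (downOp (k+1) f)

/-- The local walk `G_S := 2 P_{S,1}^∧ - I` on the vertices of the link of `S`. -/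
def localWalk (C : Finset (Finset E)) (d : ℕ) (pid : Finset E → ℝ) (S : Finset E)
    (f : Finset E → ℝ) (T : Finset E) : ℝ :=
  2 * linkUpDown C d pid S 1 f T - f T

/-- Variance of `f` with respect to the measure `μ` on `dom`. -/
def pVar (μ : Finset E → ℝ) (dom : Finset (Finset E)) (f : Finset E → ℝ) : ℝ :=
  (∑ x ∈ dom, μ x * f x ^ 2) - (∑ x ∈ dom, μ x * f x) ^ 2

/-- Relative entropy `Ent_μ(f) = E_μ[f log f] - E_μ[f] log E_μ[f]` of `f` with respect to
the measure `μ` on `dom` (note `Real.log 0 = 0`, giving the convention `0 log 0 = 0`). -/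
def pEnt (μ : Finset E → ℝ) (dom : Finset (Finset E)) (f : Finset E → ℝ) : ℝ :=
  (∑ x ∈ dom, μ x * (f x * Real.log (f x))) -
    (∑ x ∈ dom, μ x * f x) * Real.log (∑ x ∈ dom, μ x * f x)

/-- The Dirichlet form `𝔈_P(f,g) = Σ_x μ(x) f(x) ((I - P) g)(x)` of a Markov operator `P`
reversible with respect to `μ` on `dom`. -/
def pDiri (μ : Finset E → ℝ) (dom : Finset (Finset E))
    (P : (Finset E → ℝ) → Finset E → ℝ) (f g : Finset E → ℝ) : ℝ :=
  ∑ x ∈ dom, μ x * f x * (g x - P g x)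

/-- The second largest eigenvalue of a Markov operator `P` reversible with respect to the
distribution `μ` on `dom`, via the variational characterisation: the supremum of Rayleigh
quotients `⟨f, Pf⟩_μ / ⟨f, f⟩_μ` over `f` orthogonal to the constants in `L²(μ)`. -/
noncomputable def lamTwo (μ : Finset E → ℝ) (dom : Finset (Finset E))
    (P : (Finset E → ℝ) → Finset E → ℝ) : ℝ :=
  sSup {r : ℝ | ∃ f : Finset E → ℝ,
    (∑ x ∈ dom, μ x * f x = 0) ∧ (∑ x ∈ dom, μ x * f x ^ 2 ≠ 0) ∧
    r = (∑ x ∈ dom, μ x * f x * P f x) / ∑ x ∈ dom, μ x * f x ^ 2}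

/-- The modified log-Sobolev constant `ρ(P)` of a Markov operator `P` reversible with
respect to `μ` on `dom`. -/
noncomputable def mlsConst (μ : Finset E → ℝ) (dom : Finset (Finset E))
    (P : (Finset E → ℝ) → Finset E → ℝ) : ℝ :=
  sInf {r : ℝ | ∃ f : Finset E → ℝ, (∀ x ∈ dom, 0 < f x) ∧ pEnt μ dom f ≠ 0 ∧
    r = pDiri μ dom P f (fun x => Real.log (f x)) / pEnt μ dom f}

/-! ### Incidences between consecutive levels -/

lemma mem_faces {C : Finset (Finset E)} {k : ℕ} {S : Finset E} :
    S ∈ faces C k ↔ S ∈ C ∧ S.card = k := by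
  simp [faces]

/-- The faces one level below a face `S` are exactly the sets `S.erase i` with `i ∈ S`. -/
lemma sum_erase_eq {C : Finset (Finset E)} (hdown : ∀ S ∈ C, ∀ T ⊆ S, T ∈ C)
    {j : ℕ} {S : Finset E} (hS : S ∈ faces C (j + 1)) (F : Finset E → ℝ) :
    ∑ i ∈ S, F (S.erase i) = ∑ R ∈ (faces C j).filter (fun R => R ⊆ S), F R := by
  obtain ⟨hSC, hcard⟩ := mem_faces.1 hS
  have himg : (faces C j).filter (fun R => R ⊆ S) = S.image S.erase := by
    ext R
    simp only [mem_filter, mem_faces, mem_image]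
    constructor
    · rintro ⟨⟨_, hRc⟩, hRS⟩
      obtain ⟨a, haR, rfl⟩ := exists_eq_insert_iff.2 ⟨hRS, by omega⟩
      exact ⟨a, mem_insert_self a R, erase_insert haR⟩
    · rintro ⟨i, hi, rfl⟩
      have hsub := erase_subset i S
      refine ⟨⟨hdown S hSC _ hsub, ?_⟩, hsub⟩
      rw [card_erase_of_mem hi]
      omega
  rw [himg, sum_image (erase_injOn S)]

/-- Double counting of the incidences between two consecutive levels. -/
lemma sum_sum_erase {C : Finset (Finset E)} (hdown : ∀ S ∈ C, ∀ T ⊆ S, T ∈ C)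
    (j : ℕ) (F : Finset E → Finset E → ℝ) :
    ∑ S ∈ faces C (j + 1), ∑ i ∈ S, F S (S.erase i) =
      ∑ R ∈ faces C j, ∑ S ∈ (faces C (j + 1)).filter (fun S => R ⊆ S), F S R := by
  rw [sum_congr rfl fun S hS => sum_erase_eq hdown hS (F S)]
  apply sum_comm'
  intro S R
  simp only [mem_filter]
  tauto

lemma card_between {C : Finset (Finset E)} (hdown : ∀ S ∈ C, ∀ T ⊆ S, T ∈ C)
    {j d : ℕ} {R T : Finset E} (hR : R.card = j) (hT : T ∈ faces C d) (hRT : R ⊆ T) :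
    ((faces C (j + 1)).filter (fun S => R ⊆ S ∧ S ⊆ T)).card = d - j := by
  obtain ⟨hTC, hTd⟩ := mem_faces.1 hT
  have himg : (faces C (j + 1)).filter (fun S => R ⊆ S ∧ S ⊆ T) =
      (T \ R).image (fun a => insert a R) := by
    ext S
    simp only [mem_filter, mem_faces, mem_image, mem_sdiff]
    constructor
    · rintro ⟨⟨_, hSc⟩, hRS, hST⟩
      obtain ⟨a, haR, rfl⟩ := exists_eq_insert_iff.2 ⟨hRS, by omega⟩
      exact ⟨a, ⟨hST (mem_insert_self a R), haR⟩, rfl⟩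
    · rintro ⟨a, ⟨haT, haR⟩, rfl⟩
      have hsub : insert a R ⊆ T := insert_subset haT hRT
      refine ⟨⟨hdown T hTC _ hsub, ?_⟩, subset_insert a R, hsub⟩
      rw [card_insert_of_notMem haR, hR]
  rw [himg, card_image_of_injOn, card_sdiff_of_subset hRT, hR, hTd]
  exact (insert_inj_on R).mono fun a ha => by simpa using (mem_sdiff.1 ha).2

/-! ### Compatibility of the level distributions -/

lemma sum_wgt_above {C : Finset (Finset E)} (hdown : ∀ S ∈ C, ∀ T ⊆ S, T ∈ C)
    {j d : ℕ} (hjd : j ≤ d) (pid : Finset E → ℝ) {R : Finset E} (hR : R.card = j) :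
    ∑ S ∈ (faces C (j + 1)).filter (fun S => R ⊆ S), wgt C d pid S =
      ((d : ℝ) - j) * wgt C d pid R := by
  unfold wgt
  rw [sum_comm' (t' := (faces C d).filter (fun T => R ⊆ T))
    (s' := fun T => (faces C (j + 1)).filter (fun S => R ⊆ S ∧ S ⊆ T)), mul_sum]
  · refine sum_congr rfl fun T hT => ?_
    obtain ⟨hTd, hRT⟩ := mem_filter.1 hT
    rw [sum_const, card_between hdown hR hTd hRT, nsmul_eq_mul, Nat.cast_sub hjd]
  · intro S T
    simp only [mem_filter]
    constructor
    · rintro ⟨⟨hS, hRS⟩, hT, hST⟩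
      exact ⟨⟨hS, hRS, hST⟩, hT, hRS.trans hST⟩
    · rintro ⟨⟨hS, hRS, hST⟩, hT, _⟩
      exact ⟨⟨hS, hRS⟩, hT, hST⟩

/-- Relation between the normalising constants of `π_j` and `π_{j+1}`. -/
lemma sum_wgt_level {C : Finset (Finset E)} (hdown : ∀ S ∈ C, ∀ T ⊆ S, T ∈ C)
    {j d : ℕ} (hjd : j ≤ d) (pid : Finset E → ℝ) :
    ((j : ℝ) + 1) * ∑ S ∈ faces C (j + 1), wgt C d pid S =
      ((d : ℝ) - j) * ∑ R ∈ faces C j, wgt C d pid R := by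
  have h := sum_sum_erase hdown j (fun S _ => wgt C d pid S)
  rw [sum_congr rfl fun R hR => sum_wgt_above hdown hjd pid (mem_faces.1 hR).2,
    ← mul_sum] at h
  rw [← h, mul_sum]
  refine sum_congr rfl fun S hS => ?_
  rw [sum_const, (mem_faces.1 hS).2, nsmul_eq_mul]
  push_cast
  ring

/-- Compatibility of consecutive levels: the `π_{j+1}`-mass above `R` is `(j + 1) π_j(R)`. -/
lemma sum_piLev_above {C : Finset (Finset E)} (hdown : ∀ S ∈ C, ∀ T ⊆ S, T ∈ C)
    {j d : ℕ} (hjd : j < d) (pid : Finset E → ℝ) {R : Finset E} (hR : R ∈ faces C j) :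
    ∑ S ∈ (faces C (j + 1)).filter (fun S => R ⊆ S), piLev C d pid (j + 1) S =
      ((j : ℝ) + 1) * piLev C d pid j R := by
  have hlev := sum_wgt_level hdown hjd.le pid
  have habove := sum_wgt_above hdown hjd.le pid (mem_faces.1 hR).2
  have hpos : (0 : ℝ) < (d : ℝ) - j := sub_pos.2 (by exact_mod_cast hjd)
  have hj : (0 : ℝ) < (j : ℝ) + 1 := by positivity
  have hpi : ∀ S ∈ (faces C (j + 1)).filter (fun S => R ⊆ S), piLev C d pid (j + 1) S =
      wgt C d pid S / ∑ T ∈ faces C (j + 1), wgt C d pid T := fun S hS => by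
    rw [piLev, if_pos (mem_filter.1 hS).1]
  rw [sum_congr rfl hpi, ← sum_div, habove, piLev, if_pos hR]
  have hW : ∑ S ∈ faces C (j + 1), wgt C d pid S =
      ((d : ℝ) - j) * (∑ R ∈ faces C j, wgt C d pid R) / ((j : ℝ) + 1) := by
    rw [← hlev]
    field_simp
  rw [hW]
  -- No positivity of the total weight is needed: both sides vanish when it is zero.
  rcases eq_or_ne (∑ R ∈ faces C j, wgt C d pid R) 0 with h0 | h0
  · simp [h0]
  · field_simp

lemma piLev_nonneg {C : Finset (Finset E)} {d : ℕ} {pid : Finset E → ℝ}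
    (hpid : ∀ T ∈ faces C d, 0 < pid T) (k : ℕ) (S : Finset E) : 0 ≤ piLev C d pid k S := by
  have hw : ∀ S, 0 ≤ wgt C d pid S := fun S =>
    sum_nonneg fun T hT => (hpid T (mem_filter.1 hT).1).le
  unfold piLev
  split_ifs
  · exact div_nonneg (hw S) (sum_nonneg fun T _ => hw T)
  · exact le_rfl

/-! ### The up and down operators -/

/-- The defining averages of `P_j^↑`, cleared of their denominators. The identity also holds when
`π_j(R) = 0`, because then every `π_{j+1}(S)` with `S ⊇ R` vanishes. -/
lemma piLev_mul_upOp {C : Finset (Finset E)} (hdown : ∀ S ∈ C, ∀ T ⊆ S, T ∈ C)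
    {j d : ℕ} (hjd : j < d) {pid : Finset E → ℝ} (hpid : ∀ T ∈ faces C d, 0 < pid T)
    {R : Finset E} (hR : R ∈ faces C j) (f : Finset E → ℝ) :
    ((j : ℝ) + 1) * (piLev C d pid j R * upOp C d pid j f R) =
      ∑ S ∈ (faces C (j + 1)).filter (fun S => R ⊆ S), piLev C d pid (j + 1) S * f S := by
  have hN := sum_piLev_above hdown hjd pid hR
  rw [← mul_assoc, ← hN, upOp, upWith, mul_sum]
  refine sum_congr rfl fun S hS => ?_
  rcases eq_or_ne (∑ S ∈ (faces C (j + 1)).filter (fun S => R ⊆ S), piLev C d pid (j + 1) S) 0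
    with h0 | h0
  · have hz := (sum_eq_zero_iff_of_nonneg fun S _ => piLev_nonneg hpid (j + 1) S).1 h0 S hS
    simp [hz]
  · field_simp

/-- `P_{j+1}^↓` is the adjoint of `P_j^↑` with respect to `π_{j+1}` and `π_j`. -/
lemma sum_piLev_mul_downOp {C : Finset (Finset E)} (hdown : ∀ S ∈ C, ∀ T ⊆ S, T ∈ C)
    {j d : ℕ} (hjd : j < d) {pid : Finset E → ℝ} (hpid : ∀ T ∈ faces C d, 0 < pid T)
    (f h : Finset E → ℝ) :
    ∑ S ∈ faces C (j + 1), piLev C d pid (j + 1) S * f S * downOp (j + 1) h S =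
      ∑ R ∈ faces C j, piLev C d pid j R * upOp C d pid j f R * h R := by
  have hj : (0 : ℝ) < (j : ℝ) + 1 := by positivity
  have hdc := sum_sum_erase hdown j (fun S R => piLev C d pid (j + 1) S * f S * h R)
  apply mul_left_cancel₀ hj.ne'
  calc ((j : ℝ) + 1) *
        ∑ S ∈ faces C (j + 1), piLev C d pid (j + 1) S * f S * downOp (j + 1) h S
      = ∑ S ∈ faces C (j + 1), ∑ i ∈ S, piLev C d pid (j + 1) S * f S * h (S.erase i) := by
        rw [mul_sum]
        refine sum_congr rfl fun S _ => ?_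
        rw [← mul_sum, downOp]
        push_cast
        field_simp
    _ = _ := by
        rw [hdc, mul_sum]
        refine sum_congr rfl fun R hR => ?_
        rw [← sum_mul, ← piLev_mul_upOp hdown hjd hpid hR f]
        ring

lemma upOp_nonneg {C : Finset (Finset E)} {j d : ℕ} {pid : Finset E → ℝ}
    (hpid : ∀ T ∈ faces C d, 0 < pid T) {f : Finset E → ℝ}
    (hf : ∀ S ∈ faces C (j + 1), 0 < f S) (R : Finset E) : 0 ≤ upOp C d pid j f R :=
  sum_nonneg fun S hS => mul_nonneg
    (div_nonneg (piLev_nonneg hpid _ S) (sum_nonneg fun T _ => piLev_nonneg hpid _ T))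
    (hf S (mem_filter.1 hS).1).le

/-- Jensen's inequality for `log` under the transition probabilities of `P_j^↑`, which sum to
one as soon as the mass above `R` is nonzero. -/
lemma upOp_log_le {C : Finset (Finset E)} {j d : ℕ} {pid : Finset E → ℝ}
    (hpid : ∀ T ∈ faces C d, 0 < pid T) {f : Finset E → ℝ}
    (hf : ∀ S ∈ faces C (j + 1), 0 < f S) {R : Finset E}
    (hN : ∑ S ∈ (faces C (j + 1)).filter (fun S => R ⊆ S), piLev C d pid (j + 1) S ≠ 0) :
    upOp C d pid j (fun S => Real.log (f S)) R ≤ Real.log (upOp C d pid j f R) := by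
  have hJ := strictConcaveOn_log_Ioi.concaveOn.le_map_sum
    (t := (faces C (j + 1)).filter (fun S => R ⊆ S))
    (w := fun S => piLev C d pid (j + 1) S /
      ∑ S ∈ (faces C (j + 1)).filter (fun S => R ⊆ S), piLev C d pid (j + 1) S)
    (p := f)
    (fun S _ => div_nonneg (piLev_nonneg hpid _ S) (sum_nonneg fun T _ => piLev_nonneg hpid _ T))
    (by rw [← sum_div, div_self hN])
    (fun S hS => hf S (mem_filter.1 hS).1)
  simp only [smul_eq_mul] at hJ
  exact hJ

/-- **Entropy decay of the down-up walk.** For `1 ≤ k ≤ d` and strictly positive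
`f : C(k) → ℝ`, `𝔈_{P_k^∨}(f, log f) ≥ Ent_{π_k}(f) - Ent_{π_{k-1}}(P_{k-1}^↑ f)`. -/
theorem ent_decay_down_up {E : Type*} [Fintype E] [DecidableEq E]
    (C : Finset (Finset E)) (d : ℕ) (pid : Finset E → ℝ)
    (hC : IsPureComplex C d) (hpid : IsTopDist C d pid)
    (k : ℕ) (hk1 : 1 ≤ k) (hkd : k ≤ d) (f : Finset E → ℝ)
    (hf : ∀ S ∈ faces C k, 0 < f S) :
    pDiri (piLev C d pid k) (faces C k) (downUp C d pid k) f (fun x => Real.log (f x)) ≥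
      pEnt (piLev C d pid k) (faces C k) f -
        pEnt (piLev C d pid (k-1)) (faces C (k-1)) (upOp C d pid (k-1) f) := by
  obtain ⟨j, rfl⟩ : ∃ j, k = j + 1 := ⟨k - 1, by omega⟩
  have hjd : j < d := hkd
  have hdown := hC.2.1
  have hpos := hpid.1
  simp only [Nat.add_sub_cancel]
  have hadj := sum_piLev_mul_downOp hdown hjd hpos f
    (upOp C d pid j (fun x => Real.log (f x)))
  have hmean : ∑ S ∈ faces C (j + 1), piLev C d pid (j + 1) S * f S =
      ∑ R ∈ faces C j, piLev C d pid j R * upOp C d pid j f R := by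
    have h1 := sum_piLev_mul_downOp hdown hjd hpos f (fun _ => 1)
    simp only [mul_one] at h1
    rw [← h1]
    refine sum_congr rfl fun S hS => ?_
    have hj : ((j : ℝ) + 1) ≠ 0 := by positivity
    have hone : downOp (j + 1) (fun _ => (1 : ℝ)) S = 1 := by
      simp [downOp, (mem_faces.1 hS).2, hj]
    rw [hone, mul_one]
  have hjensen : ∑ R ∈ faces C j, piLev C d pid j R * upOp C d pid j f R *
        upOp C d pid j (fun x => Real.log (f x)) R ≤
      ∑ R ∈ faces C j, piLev C d pid j R *
        (upOp C d pid j f R * Real.log (upOp C d pid j f R)) := by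
    refine sum_le_sum fun R hR => ?_
    rw [mul_assoc]
    rcases eq_or_ne (piLev C d pid j R) 0 with h0 | h0
    · simp [h0]
    · refine mul_le_mul_of_nonneg_left ?_ (piLev_nonneg hpos j R)
      refine mul_le_mul_of_nonneg_left (upOp_log_le hpos hf ?_) (upOp_nonneg hpos hf R)
      rw [sum_piLev_above hdown hjd pid hR]
      exact mul_ne_zero (by positivity) h0
  have hdiri : pDiri (piLev C d pid (j + 1)) (faces C (j + 1)) (downUp C d pid (j + 1)) f
        (fun x => Real.log (f x)) =
      ∑ S ∈ faces C (j + 1), piLev C d pid (j + 1) S * (f S * Real.log (f S)) -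
        ∑ R ∈ faces C j, piLev C d pid j R * upOp C d pid j f R *
          upOp C d pid j (fun x => Real.log (f x)) R := by
    rw [← hadj, ← sum_sub_distrib]
    refine sum_congr rfl fun S _ => ?_
    simp only [downUp, Nat.add_sub_cancel]
    ring
  rw [hdiri, pEnt, pEnt, hmean]
  linarith
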